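/- Let p > 1, let x ∈ ℝ² be fixed, let μ ∈ 𝒲_p(ℝ²) and set T = d_{W_p}(δ_x, μ). Then the following are equivalent: (a) there exists a unique unit-speed geodesic segment γ : [0,T] → 𝒲_p(ℝ²) with γ(0) = δ_x and γ(T) = μ; (b) supp(μ) ⊆ D_x, where D_x = (x + L₊) ∪ (x + L₋) is the union of the two diagonal lines through x. -/

import Mathlib

open MeasureTheory

/-- The `p`-Wasserstein distance between two measures, defined as the infimum over all
couplings `π` of `μ` and `ν` of `(∬ d(x,y)^p dπ)^(1/p)`. -/
noncomputable def Wdist {X : Type*} [MeasurableSpace X] [PseudoMetricSpace X] (p : ℝ)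
    (μ ν : Measure X) : ℝ :=
  (⨅ π ∈ {π : Measure (X × X) | π.map Prod.fst = μ ∧ π.map Prod.snd = ν},
    (∫⁻ q, edist q.1 q.2 ^ p ∂π) ^ (1 / p)).toReal

/-- The `p`-Wasserstein space over `X`: Borel probability measures on `X` with finite
`p`-th moment. -/
def WSet (X : Type*) [MeasurableSpace X] [PseudoMetricSpace X] (p : ℝ) : Set (Measure X) :=
  {μ | IsProbabilityMeasure μ ∧ ∃ x₀ : X, ∫⁻ x, edist x x₀ ^ p ∂μ < ⊤}

/-- An isometry of the underlying metric space: a distance-preserving bijection. -/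
def IsIsom {X : Type*} [PseudoMetricSpace X] (T : X → X) : Prop :=
  Function.Bijective T ∧ ∀ x y, dist (T x) (T y) = dist x y

/-- An isometry of the `p`-Wasserstein space over `X`: a bijection of the space of
probability measures with finite `p`-th moment preserving the Wasserstein distance. -/
def IsWIsometry (X : Type*) [MeasurableSpace X] [PseudoMetricSpace X] (p : ℝ)
    (Φ : Measure X → Measure X) : Prop :=
  Set.BijOn Φ (WSet X p) (WSet X p) ∧
    ∀ μ ∈ WSet X p, ∀ ν ∈ WSet X p, Wdist p (Φ μ) (Φ ν) = Wdist p μ ν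

/-- The (topological) support of a measure. -/
def msupport {X : Type*} [TopologicalSpace X] [MeasurableSpace X] (μ : Measure X) : Set X :=
  {x | ∀ U : Set X, IsOpen U → x ∈ U → μ U ≠ 0}

def diagLine (ε a : ℝ) : Set (ℝ × ℝ) := {z | z.2 = ε * z.1 + a}

def Lplus : Set (ℝ × ℝ) := {z | z.2 = z.1}

def Lminus : Set (ℝ × ℝ) := {z | z.2 = -z.1}

/-- The closed square `Q = [-1,1]²`. -/
abbrev Qs : Set (ℝ × ℝ) := Set.Icc (-1, -1) (1, 1)

def LplusQ : Set ↥Qs := {q | (q : ℝ × ℝ).2 = (q : ℝ × ℝ).1}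

def LminusQ : Set ↥Qs := {q | (q : ℝ × ℝ).2 = -(q : ℝ × ℝ).1}


/-- A unit-speed geodesic segment of length `T` in the `p`-Wasserstein space over `ℝ²`. -/
def IsWGeo (p T : ℝ) (γ : ℝ → Measure (ℝ × ℝ)) : Prop :=
  (∀ t ∈ Set.Icc (0 : ℝ) T, γ t ∈ WSet (ℝ × ℝ) p) ∧
    ∀ s ∈ Set.Icc (0 : ℝ) T, ∀ t ∈ Set.Icc (0 : ℝ) T, Wdist p (γ s) (γ t) = |s - t|

/-!
A geodesic that moves mass from `x` to `z` does so with speed `dist x z`, the larger of the two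
coordinate distances. If `z` lies off the diagonals through `x`, the coordinate with the smaller
distance can make a detour without exceeding the speed `dist x z`, so transporting mass to `z`
along the bent path is as efficient as along the segment. The detour adds a nonnegative multiple
of a fixed vector to that coordinate, and adding a nonnegative random variable preserves the law
of a real random variable only if it vanishes almost surely. Hence the two geodesics from `δ_x` to
`μ` differ unless `μ` is carried by the diagonals.

Conversely, let `ν` lie at time `r` (as a fraction of the total time) on a geodesic from `δ_x` to
`μ`. The triangle inequality `dist x z ≤ dist x y + dist y z` under an optimal coupling of `ν` and
`μ`, together with the strict convexity of `t ↦ t ^ p`, forces `dist x y = r * dist x z` and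
`dist y z = (1 - r) * dist x z` almost surely. If both coordinates of `z` are at distance `dist x z`
from those of `x`, then strict convexity in each coordinate leaves only one such `y`, the point of
the segment from `x` to `z` with parameter `r`. So `ν` is the image of `μ` under `z ↦ y`.
-/

open Set Filter
open scoped ENNReal NNReal Topology

theorem eLpNorm'_map {X Y : Type*} [MeasurableSpace X] [MeasurableSpace Y] {μ : Measure X}
    {p : ℝ} {f : Y → ℝ≥0∞} {g : X → Y} (hf : Measurable f) (hg : Measurable g) :
    eLpNorm' f p (μ.map g) = eLpNorm' (fun x ↦ f (g x)) p μ := by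
  simp only [eLpNorm', enorm_eq_self]
  rw [lintegral_map (hf.pow_const p) hg]

section Couplings

variable {X : Type*} [MeasurableSpace X] {μ ν : Measure X} {π : Measure (X × X)}

/-- The couplings of `μ` and `ν`, the competitors in the infimum defining `Wdist`. -/
def couplings (μ ν : Measure X) : Set (Measure (X × X)) :=
  {π | π.map Prod.fst = μ ∧ π.map Prod.snd = ν}

theorem isProbabilityMeasure_of_mem_couplings [IsProbabilityMeasure μ]
    (hπ : π ∈ couplings μ ν) : IsProbabilityMeasure π :=
  haveI : IsProbabilityMeasure (π.map Prod.fst) := hπ.1 ▸ ‹IsProbabilityMeasure μ›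
  Measure.isProbabilityMeasure_of_map Prod.fst

theorem prod_mem_couplings [IsProbabilityMeasure μ] [IsProbabilityMeasure ν] :
    μ.prod ν ∈ couplings μ ν :=
  ⟨by simp, by simp⟩

theorem map_swap_mem_couplings (hπ : π ∈ couplings μ ν) : π.map Prod.swap ∈ couplings ν μ :=
  ⟨by rw [Measure.map_map measurable_fst measurable_swap]; exact hπ.2,
    by rw [Measure.map_map measurable_snd measurable_swap]; exact hπ.1⟩

theorem map_prodMk_mem_couplings {f g : X → X} (hf : Measurable f) (hg : Measurable g) :
    μ.map (fun z ↦ (f z, g z)) ∈ couplings (μ.map f) (μ.map g) :=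
  ⟨Measure.map_map measurable_fst (hf.prodMk hg), Measure.map_map measurable_snd (hf.prodMk hg)⟩

theorem couplings_dirac_left [MeasurableSingletonClass X] [IsProbabilityMeasure μ] (x : X) :
    couplings (Measure.dirac x) μ = {(Measure.dirac x).prod μ} := by
  refine subset_antisymm (fun π hπ ↦ ?_) (singleton_subset_iff.2 prod_mem_couplings)
  have h_fst : ∀ᵐ q ∂π, q.1 = x := by
    refine ae_of_ae_map (p := (· = x)) measurable_fst.aemeasurable ?_
    rw [hπ.1, ae_dirac_eq]
    exact rfl
  calc π = π.map (fun q ↦ (x, q.2)) := by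
        conv_lhs => rw [← Measure.map_id (μ := π)]
        exact Measure.map_congr (h_fst.mono fun q hq ↦ Prod.ext hq rfl)
    _ = (π.map Prod.snd).map (Prod.mk x) :=
        (Measure.map_map measurable_prodMk_left measurable_snd).symm
    _ = (Measure.dirac x).prod μ := by rw [hπ.2, Measure.dirac_prod]

end Couplings

section TransportCost

variable {X : Type*} [MeasurableSpace X] [PseudoMetricSpace X] {p : ℝ} {μ ν : Measure X}
  {π : Measure (X × X)}

/-- The cost `(∬ d(x,y)^p dπ)^(1/p)` of the transport plan `π`, that is the `Lᵖ` norm of the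
distance under `π`. -/
noncomputable def transportCost (p : ℝ) (π : Measure (X × X)) : ℝ≥0∞ :=
  eLpNorm' (fun q : X × X ↦ edist q.1 q.2) p π

/-- The `p`-Wasserstein distance with values in `ℝ≥0∞`: unlike `Wdist`, it does not send an infinite
distance to `0`. -/
noncomputable def eWdist (p : ℝ) (μ ν : Measure X) : ℝ≥0∞ :=
  ⨅ π ∈ couplings μ ν, transportCost p π

theorem Wdist_eq_toReal_eWdist (p : ℝ) (μ ν : Measure X) : Wdist p μ ν = (eWdist p μ ν).toReal :=
  rfl

theorem Wdist_nonneg (p : ℝ) (μ ν : Measure X) : 0 ≤ Wdist p μ ν :=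
  ENNReal.toReal_nonneg

theorem eWdist_le_transportCost (hπ : π ∈ couplings μ ν) : eWdist p μ ν ≤ transportCost p π :=
  iInf₂_le π hπ

variable [SecondCountableTopology X] [OpensMeasurableSpace X]

theorem transportCost_map {Y : Type*} [MeasurableSpace Y] {κ : Measure Y} {f : Y → X × X}
    (hf : Measurable f) :
    transportCost p (κ.map f) = eLpNorm' (fun y ↦ edist (f y).1 (f y).2) p κ :=
  eLpNorm'_map measurable_edist hf

theorem eWdist_comm (p : ℝ) (μ ν : Measure X) : eWdist p μ ν = eWdist p ν μ := by
  have h_le (μ ν : Measure X) : eWdist p μ ν ≤ eWdist p ν μ := by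
    refine le_iInf₂ fun π hπ ↦ (eWdist_le_transportCost (map_swap_mem_couplings hπ)).trans_eq ?_
    rw [transportCost_map measurable_swap]
    simp only [Prod.fst_swap, Prod.snd_swap, edist_comm, transportCost]
  exact le_antisymm (h_le μ ν) (h_le ν μ)

end TransportCost

section Moments

variable {X : Type*} [MeasurableSpace X] [PseudoMetricSpace X] [SecondCountableTopology X]
  [OpensMeasurableSpace X] {p : ℝ} {μ ν : Measure X} {π : Measure (X × X)}

theorem eLpNorm'_edist_le_add_transportCost (hp : 1 ≤ p) (x : X) (hπ : π ∈ couplings μ ν) :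
    eLpNorm' (edist x) p ν ≤ eLpNorm' (edist x) p μ + transportCost p π :=
  calc eLpNorm' (edist x) p ν = eLpNorm' (fun q : X × X ↦ edist x q.2) p π := by
        rw [← hπ.2, eLpNorm'_map (by fun_prop) measurable_snd]
    _ ≤ eLpNorm' ((fun q : X × X ↦ edist x q.1) + fun q ↦ edist q.1 q.2) p π :=
        eLpNorm'_mono_enorm_ae (by positivity) (ae_of_all _ fun q ↦ edist_triangle x q.1 q.2)
    _ ≤ eLpNorm' (fun q : X × X ↦ edist x q.1) p π + transportCost p π :=
        eLpNorm'_add_le (by fun_prop) (by fun_prop) hp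
    _ = eLpNorm' (edist x) p μ + transportCost p π := by
        rw [← hπ.1, eLpNorm'_map (by fun_prop) measurable_fst]

theorem transportCost_le_add (hp : 1 ≤ p) (x : X) (hπ : π ∈ couplings μ ν) :
    transportCost p π ≤ eLpNorm' (edist x) p μ + eLpNorm' (edist x) p ν :=
  calc transportCost p π
      ≤ eLpNorm' ((fun q : X × X ↦ edist x q.1) + fun q ↦ edist x q.2) p π :=
        eLpNorm'_mono_enorm_ae (by positivity)
          (ae_of_all _ fun q ↦ edist_triangle_left q.1 q.2 x)
    _ ≤ eLpNorm' (fun q : X × X ↦ edist x q.1) p π + eLpNorm' (fun q : X × X ↦ edist x q.2) p π :=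
        eLpNorm'_add_le (by fun_prop) (by fun_prop) hp
    _ = eLpNorm' (edist x) p μ + eLpNorm' (edist x) p ν := by
        rw [← hπ.1, ← hπ.2, eLpNorm'_map (by fun_prop) measurable_fst,
          eLpNorm'_map (by fun_prop) measurable_snd]

theorem mem_WSet_iff (hp : 1 ≤ p) (x : X) :
    μ ∈ WSet X p ↔ IsProbabilityMeasure μ ∧ eLpNorm' (edist x) p μ < ⊤ := by
  have hp₀ : 0 < p := by positivity
  have h_moment (y : X) : eLpNorm' (edist y) p μ < ⊤ ↔ ∫⁻ z, edist z y ^ p ∂μ < ⊤ := by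
    simp only [eLpNorm', enorm_eq_self, edist_comm y]
    exact ENNReal.rpow_lt_top_iff_of_pos (by positivity)
  refine and_congr_right fun hμ ↦ ⟨fun ⟨x₀, hx₀⟩ ↦ ?_, fun hx ↦ ⟨x, (h_moment x).1 hx⟩⟩
  calc eLpNorm' (edist x) p μ ≤ eLpNorm' ((fun _ ↦ edist x x₀) + edist x₀) p μ :=
        eLpNorm'_mono_enorm_ae hp₀.le (ae_of_all _ fun z ↦ edist_triangle x x₀ z)
    _ ≤ eLpNorm' (fun _ ↦ edist x x₀) p μ + eLpNorm' (edist x₀) p μ :=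
        eLpNorm'_add_le (by fun_prop) (by fun_prop) hp
    _ < ⊤ := by
        rw [eLpNorm'_const_of_isProbabilityMeasure _ hp₀]
        exact ENNReal.add_lt_top.2 ⟨edist_lt_top x x₀, (h_moment x₀).2 hx₀⟩

theorem eWdist_lt_top (hp : 1 ≤ p) (hμ : μ ∈ WSet X p) (hν : ν ∈ WSet X p) :
    eWdist p μ ν < ⊤ := by
  have := hμ.1
  have := hν.1
  obtain ⟨x⟩ := nonempty_of_isProbabilityMeasure μ
  calc eWdist p μ ν ≤ transportCost p (μ.prod ν) := eWdist_le_transportCost prod_mem_couplings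
    _ ≤ eLpNorm' (edist x) p μ + eLpNorm' (edist x) p ν :=
        transportCost_le_add hp x prod_mem_couplings
    _ < ⊤ := ENNReal.add_lt_top.2 ⟨((mem_WSet_iff hp x).1 hμ).2, ((mem_WSet_iff hp x).1 hν).2⟩

theorem ofReal_Wdist (hp : 1 ≤ p) (hμ : μ ∈ WSet X p) (hν : ν ∈ WSet X p) :
    ENNReal.ofReal (Wdist p μ ν) = eWdist p μ ν :=
  ENNReal.ofReal_toReal (eWdist_lt_top hp hμ hν).ne

end Moments

section Dirac

variable {X : Type*} [MeasurableSpace X] [MetricSpace X] [SecondCountableTopology X]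
  [BorelSpace X] {p : ℝ} {μ ν : Measure X}

theorem eWdist_dirac_left [IsProbabilityMeasure μ] (p : ℝ) (x : X) :
    eWdist p (Measure.dirac x) μ = eLpNorm' (edist x) p μ := by
  rw [eWdist, couplings_dirac_left, iInf_singleton, Measure.dirac_prod,
    transportCost_map measurable_prodMk_left]

theorem dirac_mem_WSet (hp : 0 < p) (x : X) : Measure.dirac x ∈ WSet X p :=
  ⟨inferInstance, x, by simp [ENNReal.zero_rpow_of_pos hp]⟩

theorem eWdist_dirac_le_add (hp : 1 ≤ p) (x : X) [IsProbabilityMeasure μ]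
    [IsProbabilityMeasure ν] :
    eWdist p (Measure.dirac x) ν ≤ eWdist p (Measure.dirac x) μ + eWdist p μ ν := by
  simp only [eWdist_dirac_left]
  unfold eWdist
  simp only [ENNReal.add_iInf]
  exact le_iInf₂ fun π hπ ↦ eLpNorm'_edist_le_add_transportCost hp x hπ

theorem abs_Wdist_dirac_sub_le (hp : 1 ≤ p) (x : X) (hμ : μ ∈ WSet X p) (hν : ν ∈ WSet X p) :
    |Wdist p (Measure.dirac x) μ - Wdist p (Measure.dirac x) ν| ≤ Wdist p μ ν := by
  have h_le {μ ν : Measure X} (hμ : μ ∈ WSet X p) (hν : ν ∈ WSet X p) :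
      Wdist p (Measure.dirac x) ν - Wdist p (Measure.dirac x) μ ≤ Wdist p μ ν := by
    have := hμ.1
    have := hν.1
    have hxμ := (eWdist_lt_top hp (dirac_mem_WSet (by positivity) x) hμ).ne
    have hμν := (eWdist_lt_top hp hμ hν).ne
    rw [sub_le_iff_le_add', Wdist_eq_toReal_eWdist, Wdist_eq_toReal_eWdist,
      Wdist_eq_toReal_eWdist, ← ENNReal.toReal_add hxμ hμν]
    exact ENNReal.toReal_mono (ENNReal.add_ne_top.2 ⟨hxμ, hμν⟩) (eWdist_dirac_le_add hp x)
  refine abs_sub_le_iff.2 ⟨?_, h_le hμ hν⟩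
  rw [Wdist_eq_toReal_eWdist p μ, eWdist_comm]
  exact h_le hν hμ

theorem Wdist_dirac_eq_zero_iff (hp : 1 ≤ p) (x : X) (hμ : μ ∈ WSet X p) :
    Wdist p (Measure.dirac x) μ = 0 ↔ μ = Measure.dirac x := by
  have := hμ.1
  have hp₀ : 0 < p := by positivity
  rw [Wdist_eq_toReal_eWdist, eWdist_dirac_left, ENNReal.toReal_eq_zero_iff,
    or_iff_left ((mem_WSet_iff hp x).1 hμ).2.ne]
  refine ⟨fun h ↦ ?_, ?_⟩
  · rw [eLpNorm'_eq_zero_iff hp₀ (by fun_prop)] at h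
    have h_id : (id : X → X) =ᵐ[μ] fun _ ↦ x := h.mono fun z hz ↦ (edist_eq_zero.1 hz).symm
    simpa using Measure.map_congr h_id
  · rintro rfl
    exact eLpNorm'_eq_zero_of_ae_zero hp₀ (by simp [Filter.EventuallyEq, ae_dirac_eq])

end Dirac

section OptimalCoupling

theorem lowerSemicontinuous_lintegral {X : Type*} [TopologicalSpace X] [MeasurableSpace X]
    [OpensMeasurableSpace X] {c : X → ℝ≥0∞} (hc : Continuous c) :
    LowerSemicontinuous fun π : ProbabilityMeasure X ↦ ∫⁻ x, c x ∂(π : Measure X) := by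
  have h_cont (n : ℕ) : Continuous fun a : ℝ≥0∞ ↦ (min a n).toNNReal :=
    ENNReal.continuousOn_toNNReal.comp_continuous (by fun_prop) fun a ↦ by simp
  let truncated (n : ℕ) : BoundedContinuousFunction X ℝ≥0 :=
    (BoundedContinuousFunction.mkOfCompact ⟨_, h_cont n⟩).compContinuous ⟨c, hc⟩
  have h_truncated (n : ℕ) (x : X) : (truncated n x : ℝ≥0∞) = min (c x) n :=
    ENNReal.coe_toNNReal (by simp)
  have h_iSup (π : ProbabilityMeasure X) :
      ∫⁻ x, c x ∂(π : Measure X) = ⨆ n, ∫⁻ x, truncated n x ∂(π : Measure X) := by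
    simp only [h_truncated]
    rw [← lintegral_iSup (fun n ↦ hc.measurable.min measurable_const)
      fun m n hmn x ↦ min_le_min le_rfl (by exact_mod_cast hmn)]
    simp only [← inf_iSup_eq, ENNReal.iSup_natCast, inf_top_eq]
  simp only [h_iSup]
  exact lowerSemicontinuous_iSup fun n ↦
    (ProbabilityMeasure.continuous_lintegral_boundedContinuousFunction _).lowerSemicontinuous

section Polish

variable {X : Type*} [TopologicalSpace X] [PolishSpace X] [MeasurableSpace X] [BorelSpace X]
  (μ ν : Measure X) [IsProbabilityMeasure μ] [IsProbabilityMeasure ν]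

theorem isTightMeasureSet_couplings : IsTightMeasureSet (couplings μ ν) := by
  refine IsTightMeasureSet.prodMk
    ((isTightMeasureSet_singleton (μ := μ)).subset ?_)
    ((isTightMeasureSet_singleton (μ := ν)).subset ?_)
  · rintro _ ⟨π, hπ, rfl⟩
    exact hπ.1
  · rintro _ ⟨π, hπ, rfl⟩
    exact hπ.2

theorem isClosed_couplings :
    IsClosed {π : ProbabilityMeasure (X × X) | (π : Measure (X × X)) ∈ couplings μ ν} := by
  have h_fiber {f : X × X → X} (hf : Continuous f) (κ : Measure X) [IsProbabilityMeasure κ] :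
      IsClosed {π : ProbabilityMeasure (X × X) | (π : Measure (X × X)).map f = κ} := by
    convert! (isClosed_singleton (X := ProbabilityMeasure X) (x := ⟨κ, ‹_›⟩)).preimage
      (ProbabilityMeasure.continuous_map hf) using 1
    ext π
    exact ⟨fun h ↦ Subtype.ext h, congrArg Subtype.val⟩
  exact (h_fiber continuous_fst μ).inter (h_fiber continuous_snd ν)

theorem isCompact_couplings :
    IsCompact {π : ProbabilityMeasure (X × X) | (π : Measure (X × X)) ∈ couplings μ ν} := by
  rw [← (isClosed_couplings μ ν).closure_eq]
  refine isCompact_closure_of_isTightMeasureSet ((isTightMeasureSet_couplings μ ν).subset ?_)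
  rintro _ ⟨π, hπ, rfl⟩
  exact hπ

end Polish

theorem exists_transportCost_eq_eWdist {X : Type*} [MetricSpace X] [CompleteSpace X]
    [SecondCountableTopology X] [MeasurableSpace X] [BorelSpace X] {p : ℝ} (hp : 0 ≤ p)
    (μ ν : Measure X) [IsProbabilityMeasure μ] [IsProbabilityMeasure ν] :
    ∃ π ∈ couplings μ ν, transportCost p π = eWdist p μ ν := by
  have h_lsc : LowerSemicontinuous fun π : ProbabilityMeasure (X × X) ↦
      ∫⁻ q, edist q.1 q.2 ^ p ∂(π : Measure (X × X)) :=
    lowerSemicontinuous_lintegral (ENNReal.continuous_rpow_const.comp continuous_edist)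
  obtain ⟨π, hπ, h_min⟩ := (h_lsc.lowerSemicontinuousOn _).exists_isMinOn
    ⟨⟨μ.prod ν, inferInstance⟩, prod_mem_couplings⟩ (isCompact_couplings μ ν)
  refine ⟨π, hπ, le_antisymm (le_iInf₂ fun ρ hρ ↦ ?_) (eWdist_le_transportCost hπ)⟩
  have hρ_prob := isProbabilityMeasure_of_mem_couplings hρ
  exact ENNReal.rpow_le_rpow (h_min (show ⟨ρ, hρ_prob⟩ ∈ _ from hρ)) (by positivity)

end OptimalCoupling

section StrictConvexity

theorem eq_of_le_arith_mean_of_rpow_arith_mean_le {w₁ w₂ a b c : ℝ≥0∞} {p : ℝ} (hp : 1 < p)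
    (hw : w₁ + w₂ = 1) (hw₁ : w₁ ≠ 0) (hw₂ : w₂ ≠ 0) (hc : c ≠ ⊤) (h_le : c ≤ w₁ * a + w₂ * b)
    (h_rpow : w₁ * a ^ p + w₂ * b ^ p ≤ c ^ p) : a = c ∧ b = c := by
  have hp₀ : 0 < p := by positivity
  have h_ne_top {w d : ℝ≥0∞} (hw : w ≠ 0) (h : w * d ^ p ≤ c ^ p) : d ≠ ⊤ := by
    rintro rfl
    rw [ENNReal.top_rpow_of_pos hp₀, ENNReal.mul_top hw] at h
    exact ENNReal.rpow_ne_top_of_nonneg hp₀.le hc (top_le_iff.1 h)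
  lift a to ℝ≥0 using h_ne_top hw₁ (le_self_add.trans h_rpow)
  lift b to ℝ≥0 using h_ne_top hw₂ (le_add_self.trans h_rpow)
  lift c to ℝ≥0 using hc
  lift w₁ to ℝ≥0 using ne_top_of_le_ne_top ENNReal.one_ne_top (hw ▸ le_self_add)
  lift w₂ to ℝ≥0 using ne_top_of_le_ne_top ENNReal.one_ne_top (hw ▸ le_add_self)
  simp only [← ENNReal.coe_rpow_of_nonneg _ hp₀.le] at h_rpow
  norm_cast at hw hw₁ hw₂ h_le h_rpow ⊢
  have hab : a = b := by
    by_contra hab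
    have h_lt : (w₁ * a + w₂ * b) ^ p < w₁ * a ^ p + w₂ * b ^ p := by
      exact_mod_cast (strictConvexOn_rpow hp).2 a.coe_nonneg b.coe_nonneg
        (NNReal.coe_injective.ne hab) (NNReal.coe_pos.2 (pos_iff_ne_zero.2 hw₁))
        (NNReal.coe_pos.2 (pos_iff_ne_zero.2 hw₂)) (mod_cast hw)
    exact (h_lt.trans_le h_rpow).not_ge (NNReal.rpow_le_rpow h_le hp₀.le)
  subst hab
  rw [← add_mul, hw, one_mul] at h_le h_rpow
  exact ⟨le_antisymm ((NNReal.rpow_le_rpow_iff hp₀).1 h_rpow) h_le,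
    le_antisymm ((NNReal.rpow_le_rpow_iff hp₀).1 h_rpow) h_le⟩

variable {Y : Type*} [MeasurableSpace Y] {κ : Measure Y} {p : ℝ} {w₁ w₂ : ℝ≥0∞}
  {f g h : Y → ℝ≥0∞}

theorem lintegral_rpow_le_of_eLpNorm'_le (hp : 0 < p) (hfh : eLpNorm' f p κ ≤ eLpNorm' h p κ) :
    ∫⁻ y, f y ^ p ∂κ ≤ ∫⁻ y, h y ^ p ∂κ :=
  (ENNReal.rpow_le_rpow_iff (by positivity)).1 hfh

theorem ae_eq_of_ae_le_arith_mean_of_eLpNorm'_le (hp : 1 < p) (hw : w₁ + w₂ = 1) (hw₁ : w₁ ≠ 0)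
    (hw₂ : w₂ ≠ 0) (hf : Measurable f) (hg : Measurable g) (hh : Measurable h)
    (h_top : eLpNorm' h p κ ≠ ⊤) (h_le : ∀ᵐ y ∂κ, h y ≤ w₁ * f y + w₂ * g y)
    (hfh : eLpNorm' f p κ ≤ eLpNorm' h p κ) (hgh : eLpNorm' g p κ ≤ eLpNorm' h p κ) :
    f =ᵐ[κ] h ∧ g =ᵐ[κ] h := by
  have hp₀ : 0 < p := by positivity
  have h_rpow_top : ∫⁻ y, h y ^ p ∂κ ≠ ⊤ := fun h_eq ↦ h_top <| by
    simp [eLpNorm', h_eq, ENNReal.top_rpow_of_pos, hp₀]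
  have h_convex : ∀ᵐ y ∂κ, h y ^ p ≤ w₁ * f y ^ p + w₂ * g y ^ p := h_le.mono fun y hy ↦
    (ENNReal.rpow_le_rpow hy hp₀.le).trans
      (ENNReal.rpow_arith_mean_le_arith_mean2_rpow w₁ w₂ _ _ hw hp.le)
  have h_lintegral : ∫⁻ y, w₁ * f y ^ p + w₂ * g y ^ p ∂κ ≤ ∫⁻ y, h y ^ p ∂κ :=
    calc ∫⁻ y, w₁ * f y ^ p + w₂ * g y ^ p ∂κ
        = w₁ * ∫⁻ y, f y ^ p ∂κ + w₂ * ∫⁻ y, g y ^ p ∂κ := by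
          rw [lintegral_add_left (by fun_prop), lintegral_const_mul _ (by fun_prop),
            lintegral_const_mul _ (by fun_prop)]
      _ ≤ w₁ * ∫⁻ y, h y ^ p ∂κ + w₂ * ∫⁻ y, h y ^ p ∂κ := by
          gcongr w₁ * ?_ + w₂ * ?_
          exacts [lintegral_rpow_le_of_eLpNorm'_le hp₀ hfh,
            lintegral_rpow_le_of_eLpNorm'_le hp₀ hgh]
      _ = ∫⁻ y, h y ^ p ∂κ := by rw [← add_mul, hw, one_mul]
  have h_eq := ae_eq_of_ae_le_of_lintegral_le h_convex h_rpow_top (by fun_prop) h_lintegral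
  have h_pointwise : ∀ᵐ y ∂κ, f y = h y ∧ g y = h y := by
    filter_upwards [h_le, h_eq, ae_lt_top (hh.pow_const p) h_rpow_top] with y hy_le hy_eq hy_top
    refine eq_of_le_arith_mean_of_rpow_arith_mean_le hp hw hw₁ hw₂ ?_ hy_le hy_eq.ge
    exact ((ENNReal.rpow_lt_top_iff_of_pos hp₀).1 hy_top).ne
  exact ⟨h_pointwise.mono fun _ ↦ And.left, h_pointwise.mono fun _ ↦ And.right⟩

theorem ae_eq_const_mul_of_ae_le_add_of_eLpNorm'_le (hp : 1 < p) (hw : w₁ + w₂ = 1)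
    (hw₁ : w₁ ≠ 0) (hw₂ : w₂ ≠ 0) (hf : Measurable f) (hg : Measurable g) (hh : Measurable h)
    (h_top : eLpNorm' h p κ ≠ ⊤) (h_le : ∀ᵐ y ∂κ, h y ≤ f y + g y)
    (hfh : eLpNorm' f p κ ≤ w₁ * eLpNorm' h p κ) (hgh : eLpNorm' g p κ ≤ w₂ * eLpNorm' h p κ) :
    (∀ᵐ y ∂κ, f y = w₁ * h y) ∧ ∀ᵐ y ∂κ, g y = w₂ * h y := by
  have hw₁_top : w₁ ≠ ⊤ := ne_top_of_le_ne_top ENNReal.one_ne_top (hw ▸ le_self_add)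
  have hw₂_top : w₂ ≠ ⊤ := ne_top_of_le_ne_top ENNReal.one_ne_top (hw ▸ le_add_self)
  have h_norm {w : ℝ≥0∞} {k : Y → ℝ≥0∞} (hw : w ≠ 0) (hw_top : w ≠ ⊤) (hk : Measurable k)
      (hkh : eLpNorm' k p κ ≤ w * eLpNorm' h p κ) :
      eLpNorm' (fun y ↦ w⁻¹ * k y) p κ ≤ eLpNorm' h p κ :=
    calc eLpNorm' (fun y ↦ w⁻¹ * k y) p κ ≤ w⁻¹ * eLpNorm' k p κ :=
          eLpNorm'_le_mul_eLpNorm'_of_ae_le_mul (by fun_prop) (ae_of_all _ fun _ ↦ le_rfl)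
            (by positivity)
      _ ≤ w⁻¹ * (w * eLpNorm' h p κ) := by gcongr
      _ = eLpNorm' h p κ := by rw [← mul_assoc, ENNReal.inv_mul_cancel hw hw_top, one_mul]
  have h_cancel {w : ℝ≥0∞} (hw : w ≠ 0) (hw_top : w ≠ ⊤) (a : ℝ≥0∞) : w * (w⁻¹ * a) = a := by
    rw [← mul_assoc, ENNReal.mul_inv_cancel hw hw_top, one_mul]
  obtain ⟨hfh_eq, hgh_eq⟩ := ae_eq_of_ae_le_arith_mean_of_eLpNorm'_le hp hw hw₁ hw₂
    (hf.const_mul w₁⁻¹) (hg.const_mul w₂⁻¹) hh h_top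
    (by simpa only [h_cancel hw₁ hw₁_top, h_cancel hw₂ hw₂_top] using h_le)
    (h_norm hw₁ hw₁_top hf hfh) (h_norm hw₂ hw₂_top hg hgh)
  exact ⟨hfh_eq.mono fun y hy ↦ by rw [← hy, h_cancel hw₁ hw₁_top],
    hgh_eq.mono fun y hy ↦ by rw [← hy, h_cancel hw₂ hw₂_top]⟩

end StrictConvexity

section IntermediateMeasures

variable {X : Type*} [MeasurableSpace X] [MetricSpace X] [CompleteSpace X]
  [SecondCountableTopology X] [BorelSpace X] {p r : ℝ} {x : X} {μ ν : Measure X}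

theorem exists_coupling_ae_dist_eq_of_Wdist_le (hp : 1 < p) (hμ : μ ∈ WSet X p)
    (hν : ν ∈ WSet X p) (hr : r ∈ Ioo (0 : ℝ) 1)
    (h_left : Wdist p (Measure.dirac x) ν ≤ r * Wdist p (Measure.dirac x) μ)
    (h_right : Wdist p ν μ ≤ (1 - r) * Wdist p (Measure.dirac x) μ) :
    ∃ π ∈ couplings ν μ,
      ∀ᵐ q ∂π, dist x q.1 = r * dist x q.2 ∧ dist q.1 q.2 = (1 - r) * dist x q.2 := by
  have := hμ.1
  have := hν.1
  have hr' : 0 < 1 - r := sub_pos.2 hr.2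
  have hx := dirac_mem_WSet (zero_lt_one.trans hp) x
  obtain ⟨π, hπ, h_opt⟩ := exists_transportCost_eq_eWdist (by positivity : 0 ≤ p) ν μ
  have h_fst : eLpNorm' (fun q : X × X ↦ edist x q.1) p π = eWdist p (Measure.dirac x) ν := by
    rw [eWdist_dirac_left, ← hπ.1, eLpNorm'_map (by fun_prop) measurable_fst]
  have h_snd : eLpNorm' (fun q : X × X ↦ edist x q.2) p π = eWdist p (Measure.dirac x) μ := by
    rw [eWdist_dirac_left, ← hπ.2, eLpNorm'_map (by fun_prop) measurable_snd]
  obtain ⟨h₁, h₂⟩ := ae_eq_const_mul_of_ae_le_add_of_eLpNorm'_le (κ := π)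
    (w₁ := ENNReal.ofReal r) (w₂ := ENNReal.ofReal (1 - r))
    (f := fun q ↦ edist x q.1) (g := fun q ↦ edist q.1 q.2) (h := fun q ↦ edist x q.2) hp
    (by rw [← ENNReal.ofReal_add hr.1.le hr'.le]; simp) (by simpa using hr.1) (by simpa using hr.2)
    (by fun_prop) (by fun_prop) (by fun_prop) (h_snd ▸ (eWdist_lt_top hp.le hx hμ).ne)
    (ae_of_all _ fun q ↦ edist_triangle x q.1 q.2)
    (by
      rw [h_fst, h_snd, ← ofReal_Wdist hp.le hx hν, ← ofReal_Wdist hp.le hx hμ,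
        ← ENNReal.ofReal_mul hr.1.le]
      exact ENNReal.ofReal_le_ofReal h_left)
    (by
      rw [h_snd, ← transportCost, h_opt, ← ofReal_Wdist hp.le hν hμ, ← ofReal_Wdist hp.le hx hμ,
        ← ENNReal.ofReal_mul hr'.le]
      exact ENNReal.ofReal_le_ofReal h_right)
  refine ⟨π, hπ, ?_⟩
  filter_upwards [h₁, h₂] with q hq₁ hq₂
  simp only [dist_edist, hq₁, hq₂, ENNReal.toReal_mul, ENNReal.toReal_ofReal hr.1.le,
    ENNReal.toReal_ofReal hr'.le, and_self]

theorem eq_map_of_Wdist_le (hp : 1 < p) (hμ : μ ∈ WSet X p)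
    (hν : ν ∈ WSet X p) (hr : r ∈ Ioo (0 : ℝ) 1)
    (h_left : Wdist p (Measure.dirac x) ν ≤ r * Wdist p (Measure.dirac x) μ)
    (h_right : Wdist p ν μ ≤ (1 - r) * Wdist p (Measure.dirac x) μ)
    {m : X → X} (hm : Measurable m)
    (h_unique : ∀ᵐ z ∂μ, ∀ y, dist x y = r * dist x z → dist y z = (1 - r) * dist x z → y = m z) :
    ν = μ.map m := by
  obtain ⟨π, hπ, h_dist⟩ := exists_coupling_ae_dist_eq_of_Wdist_le hp hμ hν hr h_left h_right
  have h_graph : Prod.fst =ᵐ[π] fun q ↦ m q.2 := by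
    filter_upwards [h_dist, ae_of_ae_map measurable_snd.aemeasurable (hπ.2 ▸ h_unique)]
      with q hq hq_unique using hq_unique q.1 hq.1 hq.2
  calc ν = π.map (fun q ↦ m q.2) := by rw [← hπ.1, Measure.map_congr h_graph]
    _ = μ.map m := by rw [← hπ.2, Measure.map_map hm measurable_snd]; rfl

end IntermediateMeasures

section Geodesics

/-- `γ` is a unit-speed geodesic segment from `μ` to `ν` in the `p`-Wasserstein space over `X`.
Only the restriction of `γ` to `[0, Wdist p μ ν]` matters. -/
structure IsWassersteinGeodesic {X : Type*} [MeasurableSpace X] [PseudoMetricSpace X] (p : ℝ)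
    (μ ν : Measure X) (γ : ℝ → Measure X) : Prop where
  mem_WSet : ∀ t ∈ Icc 0 (Wdist p μ ν), γ t ∈ WSet X p
  Wdist_eq : ∀ s ∈ Icc 0 (Wdist p μ ν), ∀ t ∈ Icc 0 (Wdist p μ ν), Wdist p (γ s) (γ t) = |s - t|
  source : γ 0 = μ
  target : γ (Wdist p μ ν) = ν

/-- A measurable choice of geodesics from the point `x`, parametrized proportionally to arc length
by `[0, 1]`: the one ending at `z` is `t ↦ H t z`. -/
structure IsGeodesicContraction {X : Type*} [MeasurableSpace X] [PseudoMetricSpace X] (x : X)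
    (H : ℝ → X → X) : Prop where
  measurable : ∀ t, Measurable (H t)
  apply_zero : ∀ z, H 0 z = x
  apply_one : ∀ z, H 1 z = z
  dist_le : ∀ s ∈ Icc (0 : ℝ) 1, ∀ t ∈ Icc (0 : ℝ) 1, ∀ z,
    dist (H s z) (H t z) ≤ |s - t| * dist x z

namespace IsGeodesicContraction

theorem map_zero {X : Type*} [MeasurableSpace X] [PseudoMetricSpace X] {x : X} {μ : Measure X}
    [IsProbabilityMeasure μ] {H : ℝ → X → X} (hH : IsGeodesicContraction x H) :
    μ.map (H 0) = Measure.dirac x := by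
  simp [funext hH.apply_zero]

theorem map_one {X : Type*} [MeasurableSpace X] [PseudoMetricSpace X] {x : X} {μ : Measure X}
    {H : ℝ → X → X} (hH : IsGeodesicContraction x H) : μ.map (H 1) = μ := by
  rw [show H 1 = id from funext hH.apply_one, Measure.map_id]

variable {X : Type*} [MeasurableSpace X] [MetricSpace X] [SecondCountableTopology X]
  [BorelSpace X] {p s t : ℝ} {x : X} {μ : Measure X} {H : ℝ → X → X}

theorem eWdist_map_map_le (hH : IsGeodesicContraction x H) (hp : 0 < p) [IsProbabilityMeasure μ]
    (hs : s ∈ Icc (0 : ℝ) 1) (ht : t ∈ Icc (0 : ℝ) 1) :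
    eWdist p (μ.map (H s)) (μ.map (H t)) ≤
      ENNReal.ofReal |s - t| * eWdist p (Measure.dirac x) μ :=
  calc eWdist p (μ.map (H s)) (μ.map (H t))
      ≤ transportCost p (μ.map fun z ↦ (H s z, H t z)) :=
        eWdist_le_transportCost (map_prodMk_mem_couplings (hH.measurable s) (hH.measurable t))
    _ = eLpNorm' (fun z ↦ edist (H s z) (H t z)) p μ :=
        transportCost_map ((hH.measurable s).prodMk (hH.measurable t))
    _ ≤ ENNReal.ofReal |s - t| * eLpNorm' (edist x) p μ := by
        refine eLpNorm'_le_mul_eLpNorm'_of_ae_le_mul (by fun_prop) (ae_of_all _ fun z ↦ ?_) hp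
        rw [enorm_eq_self, enorm_eq_self, edist_dist, edist_dist,
          ← ENNReal.ofReal_mul (abs_nonneg _)]
        exact ENNReal.ofReal_le_ofReal (hH.dist_le s hs t ht z)
    _ = ENNReal.ofReal |s - t| * eWdist p (Measure.dirac x) μ := by rw [eWdist_dirac_left]

theorem map_mem_WSet (hH : IsGeodesicContraction x H) (hp : 1 ≤ p) (hμ : μ ∈ WSet X p)
    (ht : t ∈ Icc (0 : ℝ) 1) : μ.map (H t) ∈ WSet X p := by
  have := hμ.1
  have := Measure.isProbabilityMeasure_map (μ := μ) (hH.measurable t).aemeasurable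
  refine (mem_WSet_iff hp x).2 ⟨this, ?_⟩
  calc eLpNorm' (edist x) p (μ.map (H t)) = eWdist p (μ.map (H 0)) (μ.map (H t)) := by
        rw [hH.map_zero, eWdist_dirac_left]
    _ ≤ ENNReal.ofReal |0 - t| * eWdist p (Measure.dirac x) μ :=
        hH.eWdist_map_map_le (by positivity) (by simp) ht
    _ < ⊤ := ENNReal.mul_lt_top ENNReal.ofReal_lt_top
        (eWdist_lt_top hp (dirac_mem_WSet (by positivity) x) hμ)

theorem Wdist_map_map_le (hH : IsGeodesicContraction x H) (hp : 1 ≤ p) (hμ : μ ∈ WSet X p)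
    (hs : s ∈ Icc (0 : ℝ) 1) (ht : t ∈ Icc (0 : ℝ) 1) :
    Wdist p (μ.map (H s)) (μ.map (H t)) ≤ |s - t| * Wdist p (Measure.dirac x) μ := by
  have := hμ.1
  have h_top := (eWdist_lt_top hp (dirac_mem_WSet (by positivity) x) hμ).ne
  simpa [Wdist_eq_toReal_eWdist] using ENNReal.toReal_mono
    (ENNReal.mul_ne_top ENNReal.ofReal_ne_top h_top)
    (hH.eWdist_map_map_le (zero_lt_one.trans_le hp) hs ht)

theorem Wdist_dirac_map (hH : IsGeodesicContraction x H) (hp : 1 ≤ p) (hμ : μ ∈ WSet X p)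
    (ht : t ∈ Icc (0 : ℝ) 1) :
    Wdist p (Measure.dirac x) (μ.map (H t)) = t * Wdist p (Measure.dirac x) μ := by
  have := hμ.1
  have h_from_dirac := hH.Wdist_map_map_le hp hμ (s := 0) (by simp) ht
  rw [hH.map_zero, zero_sub, abs_neg, abs_of_nonneg ht.1] at h_from_dirac
  have h_to_target := hH.Wdist_map_map_le hp hμ (s := 1) (by simp) ht
  rw [hH.map_one, abs_of_nonneg (sub_nonneg.2 ht.2)] at h_to_target
  have h_triangle := abs_Wdist_dirac_sub_le hp x hμ (hH.map_mem_WSet hp hμ ht)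
  linarith [le_abs_self (Wdist p (Measure.dirac x) μ - Wdist p (Measure.dirac x) (μ.map (H t)))]

theorem Wdist_map_map (hH : IsGeodesicContraction x H) (hp : 1 ≤ p) (hμ : μ ∈ WSet X p)
    (hs : s ∈ Icc (0 : ℝ) 1) (ht : t ∈ Icc (0 : ℝ) 1) :
    Wdist p (μ.map (H s)) (μ.map (H t)) = |s - t| * Wdist p (Measure.dirac x) μ := by
  refine le_antisymm (hH.Wdist_map_map_le hp hμ hs ht) ?_
  calc |s - t| * Wdist p (Measure.dirac x) μ
      = |s * Wdist p (Measure.dirac x) μ - t * Wdist p (Measure.dirac x) μ| := by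
        rw [← sub_mul, abs_mul, abs_of_nonneg (Wdist_nonneg p _ μ)]
    _ ≤ Wdist p (μ.map (H s)) (μ.map (H t)) := by
        rw [← hH.Wdist_dirac_map hp hμ hs, ← hH.Wdist_dirac_map hp hμ ht]
        exact abs_Wdist_dirac_sub_le hp x (hH.map_mem_WSet hp hμ hs) (hH.map_mem_WSet hp hμ ht)

theorem isWassersteinGeodesic (hH : IsGeodesicContraction x H) (hp : 1 ≤ p)
    (hμ : μ ∈ WSet X p) :
    IsWassersteinGeodesic p (Measure.dirac x) μ
      fun t ↦ μ.map (H (t / Wdist p (Measure.dirac x) μ)) := by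
  have := hμ.1
  set T := Wdist p (Measure.dirac x) μ with hT
  have h_div {t : ℝ} (ht : t ∈ Icc 0 T) : t / T ∈ Icc (0 : ℝ) 1 :=
    ⟨div_nonneg ht.1 (ht.1.trans ht.2), div_le_one_of_le₀ ht.2 (ht.1.trans ht.2)⟩
  refine ⟨fun t ht ↦ hH.map_mem_WSet hp hμ (h_div ht), fun s hs t ht ↦ ?_, ?_, ?_⟩
  · rw [hH.Wdist_map_map hp hμ (h_div hs) (h_div ht), ← hT, ← sub_div, abs_div,
      abs_of_nonneg (hs.1.trans hs.2)]
    refine div_mul_cancel_of_imp fun hT₀ ↦ ?_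
    rw [hT₀, Icc_self, mem_singleton_iff] at hs ht
    rw [hs, ht, sub_self, abs_zero]
  · simp only [zero_div, hH.map_zero]
  · rcases eq_or_ne T 0 with hT₀ | hT₀
    · simp only [← hT, hT₀, div_zero, hH.map_zero]
      exact ((Wdist_dirac_eq_zero_iff hp x hμ).1 hT₀).symm
    · simp only [← hT, div_self hT₀, hH.map_one]

end IsGeodesicContraction

end Geodesics

section EqualLaws

variable {Y : Type*} [MeasurableSpace Y] {κ : Measure Y} [IsFiniteMeasure κ]

theorem ae_eq_of_ae_le_of_map_eq {f g : Y → ℝ} (hf : Measurable f) (hg : Measurable g)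
    (h_le : f ≤ᵐ[κ] g) (h_map : κ.map f = κ.map g) : f =ᵐ[κ] g := by
  -- Composing with the bounded increasing function `arctan` makes everything integrable.
  have h_integrable {k : Y → ℝ} (hk : Measurable k) : Integrable (fun y ↦ Real.arctan (k y)) κ :=
    .of_bound (by fun_prop) (Real.pi / 2) (ae_of_all _ fun y ↦
      abs_le.2 ⟨(Real.neg_pi_div_two_lt_arctan _).le, (Real.arctan_lt_pi_div_two _).le⟩)
  have h_integral : ∫ y, Real.arctan (f y) ∂κ = ∫ y, Real.arctan (g y) ∂κ := by
    rw [← integral_map hf.aemeasurable (by fun_prop), h_map,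
      integral_map hg.aemeasurable (by fun_prop)]
  have h_arctan := (integral_eq_iff_of_ae_le (h_integrable hf) (h_integrable hg)
    (h_le.mono fun _ hy ↦ Real.arctan_strictMono.monotone hy)).1 h_integral
  exact h_arctan.mono fun _ hy ↦ Real.arctan_injective hy

theorem ae_eq_zero_of_map_add_smul_eq {E : Type*} [NormedAddCommGroup E] [NormedSpace ℝ E]
    [MeasurableSpace E] [BorelSpace E] [SecondCountableTopology E] {f : Y → E} {g : Y → ℝ}
    (hf : Measurable f) (hg : Measurable g) (hg_nonneg : 0 ≤ᵐ[κ] g) {e : E} (he : e ≠ 0)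
    (h_map : κ.map f = κ.map fun y ↦ f y + g y • e) : g =ᵐ[κ] 0 := by
  obtain ⟨φ, hφ⟩ := SeparatingDual.exists_eq_one (R := ℝ) he
  have h_eq : (fun y ↦ φ (f y)) =ᵐ[κ] fun y ↦ φ (f y + g y • e) := by
    refine ae_eq_of_ae_le_of_map_eq (by fun_prop) (by fun_prop) ?_ ?_
    · filter_upwards [hg_nonneg] with y hy
      simpa [hφ] using hy
    · have h_map_map := congrArg (Measure.map φ) h_map
      rwa [Measure.map_map φ.measurable hf, Measure.map_map φ.measurable (by fun_prop)] at h_map_map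
  filter_upwards [h_eq] with y hy
  simpa [hφ] using hy

end EqualLaws

section Detour

variable {E F : Type*} [NormedAddCommGroup E] [NormedSpace ℝ E] [NormedAddCommGroup F]
  [NormedSpace ℝ F] {r s t : ℝ} {x z e : E}

theorem isGeodesicContraction_lineMap [MeasurableSpace E] [BorelSpace E]
    [SecondCountableTopology E] (x : E) :
    IsGeodesicContraction x fun t z ↦ AffineMap.lineMap x z t where
  measurable t := by
    simp only [AffineMap.lineMap_apply_module]
    fun_prop
  apply_zero := AffineMap.lineMap_apply_zero x
  apply_one := AffineMap.lineMap_apply_one x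
  dist_le s _ t _ z := (dist_lineMap_lineMap x z s t).le

/-- The point reached at time `t ∈ [0, 1]` when going from `x` to `z` along the segment while
wandering off in the direction `e` until time `1 / 2` and back afterwards. The segment has speed
`dist x z`, so for `‖e‖ = 1` and `dist x z ≤ r` the excursion keeps the total speed at most `r`. -/
noncomputable def detour (x e : E) (r t : ℝ) (z : E) : E :=
  AffineMap.lineMap x z t + (min t (1 - t) * (r - dist x z)) • e

theorem dist_detour_le (he : ‖e‖ = 1) (hr : dist x z ≤ r) :
    dist (detour x e r s z) (detour x e r t z) ≤ |s - t| * r := by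
  have h_min : |min s (1 - s) - min t (1 - t)| ≤ |s - t| := by
    simpa [abs_sub_comm t s] using abs_min_sub_min_le_max s (1 - s) t (1 - t)
  calc dist (detour x e r s z) (detour x e r t z)
      ≤ |s - t| * dist x z + |min s (1 - s) - min t (1 - t)| * (r - dist x z) := by
        refine (dist_add_add_le _ _ _ _).trans_eq ?_
        rw [dist_lineMap_lineMap, Real.dist_eq, dist_eq_norm (_ • e), ← sub_smul, ← sub_mul,
          norm_smul, he, mul_one, Real.norm_eq_abs, abs_mul, abs_of_nonneg (sub_nonneg.2 hr)]
    _ ≤ |s - t| * dist x z + |s - t| * (r - dist x z) := by gcongr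
    _ = |s - t| * r := by ring

/-- The contraction of `E × F` onto `x` in which each coordinate makes a detour using up the full
speed `dist x z = max (dist x.1 z.1) (dist x.2 z.2)`. -/
noncomputable def prodDetour (x e : E × F) (t : ℝ) (z : E × F) : E × F :=
  (detour x.1 e.1 (dist x z) t z.1, detour x.2 e.2 (dist x z) t z.2)

theorem isGeodesicContraction_prodDetour [MeasurableSpace E] [BorelSpace E]
    [SecondCountableTopology E] [MeasurableSpace F] [BorelSpace F] [SecondCountableTopology F]
    (x : E × F) {e : E × F} (he₁ : ‖e.1‖ = 1) (he₂ : ‖e.2‖ = 1) :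
    IsGeodesicContraction x (prodDetour x e) where
  measurable t := by
    unfold prodDetour detour
    simp only [AffineMap.lineMap_apply_module]
    fun_prop
  apply_zero z := by simp [prodDetour, detour]
  apply_one z := by simp [prodDetour, detour]
  dist_le s _ t _ z :=
    max_le (dist_detour_le he₁ (le_max_left _ _)) (dist_detour_le he₂ (le_max_right _ _))

end Detour

section DetourMidpoint

variable {E F : Type*} [NormedAddCommGroup E] [NormedSpace ℝ E] [MeasurableSpace E] [BorelSpace E]
  [SecondCountableTopology E] [NormedAddCommGroup F] [NormedSpace ℝ F] [MeasurableSpace F]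
  [BorelSpace F] [SecondCountableTopology F] {t : ℝ}

theorem ae_dist_eq_of_map_lineMap_eq_map_detour {Y : Type*} [MeasurableSpace Y] {κ : Measure Y}
    [IsFiniteMeasure κ] {x e : E} {f : Y → E} {r : Y → ℝ} (ht : t ∈ Ioo (0 : ℝ) 1) (he : e ≠ 0)
    (hf : Measurable f) (hr : Measurable r) (h_le : ∀ᵐ y ∂κ, dist x (f y) ≤ r y)
    (h_map : κ.map (fun y ↦ AffineMap.lineMap x (f y) t) =
      κ.map fun y ↦ detour x e (r y) t (f y)) :
    ∀ᵐ y ∂κ, dist x (f y) = r y := by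
  have h_amplitude : 0 < min t (1 - t) := lt_min ht.1 (sub_pos.2 ht.2)
  have h_zero : (fun y ↦ min t (1 - t) * (r y - dist x (f y))) =ᵐ[κ] 0 := by
    refine ae_eq_zero_of_map_add_smul_eq ?_ (by fun_prop) ?_ he h_map
    · exact (isGeodesicContraction_lineMap x).measurable t |>.comp hf
    · exact h_le.mono fun y hy ↦ mul_nonneg h_amplitude.le (sub_nonneg.2 hy)
  exact h_zero.mono fun y hy ↦
    (sub_eq_zero.1 ((mul_eq_zero.1 hy).resolve_left h_amplitude.ne')).symm

theorem ae_dist_fst_eq_dist_snd_of_map_lineMap_eq_map_prodDetour {x e : E × F}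
    {μ : Measure (E × F)} [IsFiniteMeasure μ] (ht : t ∈ Ioo (0 : ℝ) 1) (he₁ : ‖e.1‖ = 1)
    (he₂ : ‖e.2‖ = 1)
    (h_map : μ.map (fun z ↦ AffineMap.lineMap x z t) = μ.map (prodDetour x e t)) :
    ∀ᵐ z ∂μ, dist x.1 z.1 = dist x.2 z.2 := by
  have h_line := (isGeodesicContraction_lineMap x).measurable t
  have h_detour := (isGeodesicContraction_prodDetour x he₁ he₂).measurable t
  have h_fst : ∀ᵐ z ∂μ, dist x.1 z.1 = dist x z := by
    refine ae_dist_eq_of_map_lineMap_eq_map_detour ht (norm_ne_zero_iff.1 (he₁ ▸ one_ne_zero))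
      measurable_fst (by fun_prop) (ae_of_all _ fun z ↦ le_max_left _ _) ?_
    have h := congrArg (Measure.map Prod.fst) h_map
    rwa [Measure.map_map measurable_fst h_line, Measure.map_map measurable_fst h_detour] at h
  have h_snd : ∀ᵐ z ∂μ, dist x.2 z.2 = dist x z := by
    refine ae_dist_eq_of_map_lineMap_eq_map_detour ht (norm_ne_zero_iff.1 (he₂ ▸ one_ne_zero))
      measurable_snd (by fun_prop) (ae_of_all _ fun z ↦ le_max_right _ _) ?_
    have h := congrArg (Measure.map Prod.snd) h_map
    rwa [Measure.map_map measurable_snd h_line, Measure.map_map measurable_snd h_detour] at h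
  filter_upwards [h_fst, h_snd] with z hz₁ hz₂ using hz₁.trans hz₂.symm

end DetourMidpoint

section UniqueIntermediatePoints

variable {E F : Type*} [NormedAddCommGroup E] [NormedSpace ℝ E] [StrictConvexSpace ℝ E]
  [NormedAddCommGroup F] [NormedSpace ℝ F] [StrictConvexSpace ℝ F] {r : ℝ}

theorem eq_lineMap_of_dist_le_mul_of_dist_le_mul {x y z : E} (hxy : dist x y ≤ r * dist x z)
    (hyz : dist y z ≤ (1 - r) * dist x z) : y = AffineMap.lineMap x z r := by
  have h_triangle := dist_triangle x y z
  exact eq_lineMap_of_dist_eq_mul_of_dist_eq_mul (by linarith) (by linarith)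

theorem eq_lineMap_of_dist_fst_eq_dist_snd {x y z : E × F} (hz : dist x.1 z.1 = dist x.2 z.2)
    (hxy : dist x y ≤ r * dist x z) (hyz : dist y z ≤ (1 - r) * dist x z) :
    y = AffineMap.lineMap x z r := by
  have hxz₁ : dist x z = dist x.1 z.1 := by rw [Prod.dist_eq, ← hz, max_self]
  have hxz₂ : dist x z = dist x.2 z.2 := hxz₁.trans hz
  have h_fst : y.1 = AffineMap.lineMap x.1 z.1 r :=
    eq_lineMap_of_dist_le_mul_of_dist_le_mul (hxz₁ ▸ (le_max_left _ _).trans hxy)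
      (hxz₁ ▸ (le_max_left _ _).trans hyz)
  have h_snd : y.2 = AffineMap.lineMap x.2 z.2 r :=
    eq_lineMap_of_dist_le_mul_of_dist_le_mul (hxz₂ ▸ (le_max_right _ _).trans hxy)
      (hxz₂ ▸ (le_max_right _ _).trans hyz)
  ext1
  · rw [h_fst, AffineMap.fst_lineMap]
  · rw [h_snd, AffineMap.snd_lineMap]

end UniqueIntermediatePoints

section Support

theorem msupport_eq_support {X : Type*} [TopologicalSpace X] [MeasurableSpace X]
    (μ : Measure X) : msupport μ = μ.support := by
  simp only [msupport, Measure.support_eq_forall_isOpen, pos_iff_ne_zero,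
    imp.swap (a := IsOpen _)]

theorem msupport_subset_iff_ae_mem {X : Type*} [TopologicalSpace X] [HereditarilyLindelofSpace X]
    [MeasurableSpace X] {μ : Measure X} {D : Set X} (hD : IsClosed D) :
    msupport μ ⊆ D ↔ ∀ᵐ z ∂μ, z ∈ D := by
  rw [msupport_eq_support]
  exact ⟨mem_of_superset Measure.support_mem_ae, Measure.support_subset_of_isClosed hD⟩

end Support

section UniqueGeodesics

theorem isWassersteinGeodesic_iff_isWGeo {p : ℝ} {μ ν : Measure (ℝ × ℝ)}
    {γ : ℝ → Measure (ℝ × ℝ)} :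
    IsWassersteinGeodesic p μ ν γ ↔
      IsWGeo p (Wdist p μ ν) γ ∧ γ 0 = μ ∧ γ (Wdist p μ ν) = ν :=
  ⟨fun h ↦ ⟨⟨h.mem_WSet, h.Wdist_eq⟩, h.source, h.target⟩,
    fun ⟨⟨h_mem, h_dist⟩, h_source, h_target⟩ ↦ ⟨h_mem, h_dist, h_source, h_target⟩⟩

theorem IsWassersteinGeodesic.Wdist_source {X : Type*} [MeasurableSpace X] [PseudoMetricSpace X]
    {p t : ℝ} {μ ν : Measure X} {γ : ℝ → Measure X} (hγ : IsWassersteinGeodesic p μ ν γ)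
    (ht : t ∈ Icc 0 (Wdist p μ ν)) : Wdist p μ (γ t) = t := by
  have h := hγ.Wdist_eq 0 ⟨le_rfl, Wdist_nonneg p μ ν⟩ t ht
  rwa [hγ.source, zero_sub, abs_neg, abs_of_nonneg ht.1] at h

theorem IsWassersteinGeodesic.Wdist_target {X : Type*} [MeasurableSpace X] [PseudoMetricSpace X]
    {p t : ℝ} {μ ν : Measure X} {γ : ℝ → Measure X} (hγ : IsWassersteinGeodesic p μ ν γ)
    (ht : t ∈ Icc 0 (Wdist p μ ν)) : Wdist p (γ t) ν = Wdist p μ ν - t := by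
  have h := hγ.Wdist_eq t ht _ ⟨Wdist_nonneg p μ ν, le_rfl⟩
  rwa [hγ.target, abs_sub_comm, abs_of_nonneg (sub_nonneg.2 ht.2)] at h

variable {E F : Type*} [NormedAddCommGroup E] [NormedSpace ℝ E] [MeasurableSpace E] [BorelSpace E]
  [SecondCountableTopology E] [NormedAddCommGroup F] [NormedSpace ℝ F] [MeasurableSpace F]
  [BorelSpace F] [SecondCountableTopology F] {p : ℝ} {x : E × F} {μ : Measure (E × F)}

theorem ae_dist_fst_eq_dist_snd_of_unique_geodesic [Nontrivial E] [Nontrivial F] (hp : 1 ≤ p)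
    (hμ : μ ∈ WSet (E × F) p)
    (h_unique : ∀ γ₁ γ₂, IsWassersteinGeodesic p (Measure.dirac x) μ γ₁ →
      IsWassersteinGeodesic p (Measure.dirac x) μ γ₂ →
      EqOn γ₁ γ₂ (Icc 0 (Wdist p (Measure.dirac x) μ))) :
    ∀ᵐ z ∂μ, dist x.1 z.1 = dist x.2 z.2 := by
  have := hμ.1
  rcases (Wdist_nonneg p (Measure.dirac x) μ).eq_or_lt with hT | hT
  · rw [(Wdist_dirac_eq_zero_iff hp x hμ).1 hT.symm, ae_dirac_eq]
    exact (dist_self x.1).trans (dist_self x.2).symm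
  obtain ⟨e₁, he₁⟩ := exists_norm_eq E zero_le_one
  obtain ⟨e₂, he₂⟩ := exists_norm_eq F zero_le_one
  have h_midpoint := h_unique _ _ ((isGeodesicContraction_lineMap x).isWassersteinGeodesic hp hμ)
    ((isGeodesicContraction_prodDetour x (e := (e₁, e₂)) he₁ he₂).isWassersteinGeodesic hp hμ)
    ⟨half_pos hT |>.le, half_le_self hT.le⟩
  simp only [div_div_cancel_left' hT.ne'] at h_midpoint
  exact ae_dist_fst_eq_dist_snd_of_map_lineMap_eq_map_prodDetour (e := (e₁, e₂)) (t := 2⁻¹)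
    (by norm_num) he₁ he₂ h_midpoint

theorem IsWassersteinGeodesic.eq_map_lineMap [StrictConvexSpace ℝ E] [CompleteSpace E]
    [StrictConvexSpace ℝ F] [CompleteSpace F] {t : ℝ} {γ : ℝ → Measure (E × F)}
    (hγ : IsWassersteinGeodesic p (Measure.dirac x) μ γ) (hp : 1 < p) (hμ : μ ∈ WSet (E × F) p)
    (h_dist : ∀ᵐ z ∂μ, dist x.1 z.1 = dist x.2 z.2)
    (ht : t ∈ Icc 0 (Wdist p (Measure.dirac x) μ)) :
    γ t = μ.map fun z ↦ AffineMap.lineMap x z (t / Wdist p (Measure.dirac x) μ) := by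
  have hH := isGeodesicContraction_lineMap x
  set T := Wdist p (Measure.dirac x) μ with hT
  have h_line := hH.isWassersteinGeodesic hp.le hμ
  rcases ht.1.eq_or_lt with rfl | ht₀
  · exact hγ.source.trans h_line.source.symm
  rcases ht.2.eq_or_lt with rfl | ht₁
  · exact hγ.target.trans h_line.target.symm
  have hT₀ : T ≠ 0 := (ht₀.trans ht₁).ne'
  refine eq_map_of_Wdist_le (x := x) hp hμ (hγ.mem_WSet t ht)
    ⟨div_pos ht₀ (ht₀.trans ht₁), (div_lt_one (ht₀.trans ht₁)).2 ht₁⟩ ?_ ?_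
    (hH.measurable _) ?_
  · rw [hγ.Wdist_source ht, ← hT, div_mul_cancel₀ _ hT₀]
  · rw [hγ.Wdist_target ht, ← hT, sub_mul, one_mul, div_mul_cancel₀ _ hT₀]
  · filter_upwards [h_dist] with z hz y hxy hyz
      using eq_lineMap_of_dist_fst_eq_dist_snd hz hxy.le hyz.le

theorem unique_geodesic_from_dirac_iff_diag_support_general [Nontrivial E] [StrictConvexSpace ℝ E]
    [CompleteSpace E] [Nontrivial F] [StrictConvexSpace ℝ F] [CompleteSpace F] (hp : 1 < p)
    (hμ : μ ∈ WSet (E × F) p) :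
    ((∃ γ, IsWassersteinGeodesic p (Measure.dirac x) μ γ) ∧
      ∀ γ₁ γ₂, IsWassersteinGeodesic p (Measure.dirac x) μ γ₁ →
        IsWassersteinGeodesic p (Measure.dirac x) μ γ₂ →
        EqOn γ₁ γ₂ (Icc 0 (Wdist p (Measure.dirac x) μ))) ↔
    msupport μ ⊆ {z | dist x.1 z.1 = dist x.2 z.2} := by
  rw [msupport_subset_iff_ae_mem (isClosed_eq (by fun_prop) (by fun_prop))]
  refine ⟨fun h ↦ ae_dist_fst_eq_dist_snd_of_unique_geodesic hp.le hμ h.2, fun h_dist ↦ ⟨?_, ?_⟩⟩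
  · exact ⟨_, (isGeodesicContraction_lineMap x).isWassersteinGeodesic hp.le hμ⟩
  · exact fun γ₁ γ₂ h₁ h₂ t ht ↦
      (h₁.eq_map_lineMap hp hμ h_dist ht).trans (h₂.eq_map_lineMap hp hμ h_dist ht).symm

theorem setOf_dist_fst_eq_dist_snd (x : ℝ × ℝ) :
    {z : ℝ × ℝ | dist x.1 z.1 = dist x.2 z.2} =
      {z : ℝ × ℝ | z.2 - x.2 = z.1 - x.1} ∪ {z : ℝ × ℝ | z.2 - x.2 = -(z.1 - x.1)} := by
  ext z
  rw [mem_ofPred_eq, dist_comm, dist_comm x.2, Real.dist_eq, Real.dist_eq, eq_comm, abs_eq_abs]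
  exact Iff.rfl

end UniqueGeodesics

/-- For `p > 1` and `x ∈ ℝ²`, there is a unique unit-speed geodesic from `δ_x` to `μ`
in `𝒲_p(ℝ², d_m)` if and only if `μ` is supported on the union `D_x` of the two
diagonal lines through `x`. -/
theorem unique_geodesic_from_dirac_iff_diag_support (p : ℝ) (hp : 1 < p) (x : ℝ × ℝ)
    (μ : Measure (ℝ × ℝ)) (hμ : μ ∈ WSet (ℝ × ℝ) p) :
    ((∃ γ : ℝ → Measure (ℝ × ℝ), IsWGeo p (Wdist p (Measure.dirac x) μ) γ ∧
        γ 0 = Measure.dirac x ∧ γ (Wdist p (Measure.dirac x) μ) = μ) ∧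
      (∀ γ₁ γ₂ : ℝ → Measure (ℝ × ℝ),
        IsWGeo p (Wdist p (Measure.dirac x) μ) γ₁ →
        γ₁ 0 = Measure.dirac x → γ₁ (Wdist p (Measure.dirac x) μ) = μ →
        IsWGeo p (Wdist p (Measure.dirac x) μ) γ₂ →
        γ₂ 0 = Measure.dirac x → γ₂ (Wdist p (Measure.dirac x) μ) = μ →
        ∀ t ∈ Set.Icc (0 : ℝ) (Wdist p (Measure.dirac x) μ), γ₁ t = γ₂ t)) ↔
    msupport μ ⊆
      {z : ℝ × ℝ | z.2 - x.2 = z.1 - x.1} ∪ {z : ℝ × ℝ | z.2 - x.2 = -(z.1 - x.1)} := by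
  rw [← setOf_dist_fst_eq_dist_snd, ← unique_geodesic_from_dirac_iff_diag_support_general hp hμ]
  simp only [isWassersteinGeodesic_iff_isWGeo, EqOn, and_imp]
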